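/- On an almost quaternion-Hermitian manifold, for any local adapted basis I,J,K the three-form β_I = J dω_J + K dω_K is of type {2,1} with respect to I, i.e. (I_{(12)} + I_{(13)} + I_{(23)}) (J dω_J + K dω_K) = J dω_J + K dω_K, and likewise β_J = K dω_K + I dω_I and β_K = I dω_I + J dω_J are of type {2,1} with respect to J and K respectively. -/

import Mathlib

/-!  Synthetic (Koszul-style) model of an almost quaternion-Hermitian `4n`-manifold.

`C` plays the role of the commutative ℝ-algebra of smooth functions and `V` that of
the `C`-module of vector fields, equipped with a directional derivative `D`, a Lie
bracket, a Riemannian metric `g` together with its Levi-Civita connection `nab`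
(characterised by being torsion-free and metric), a local adapted basis `I, J, K`
of anticommuting almost complex structures with `K = I J`, each compatible with the
metric, and a (local) orthonormal frame.  -/

noncomputable section

open scoped BigOperators

structure AQH (n : ℕ) (C : Type*) (V : Type*) [CommRing C] [Algebra ℝ C]
    [AddCommGroup V] [Module C V] where
  /-- derivative of a function along a vector field -/
  D : V → C → C
  D_add : ∀ X f g, D X (f + g) = D X f + D X g
  D_mul : ∀ X f g, D X (f * g) = f * D X g + g * D X f
  D_const : ∀ X (r : ℝ), D X (algebraMap ℝ C r) = 0
  D_addX : ∀ X Y f, D (X + Y) f = D X f + D Y f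
  D_smulX : ∀ (f : C) (X : V) (h : C), D (f • X) h = f * D X h
  /-- the Lie bracket of vector fields -/
  bracket : V → V → V
  bracket_skew : ∀ X Y, bracket X Y = -bracket Y X
  bracket_add : ∀ X Y Z, bracket X (Y + Z) = bracket X Y + bracket X Z
  bracket_smul : ∀ X (f : C) Y, bracket X (f • Y) = f • bracket X Y + (D X f) • Y
  bracket_jacobi : ∀ X Y Z,
    bracket X (bracket Y Z) + bracket Y (bracket Z X) + bracket Z (bracket X Y) = 0
  D_bracket : ∀ X Y f, D (bracket X Y) f = D X (D Y f) - D Y (D X f)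
  /-- the Riemannian metric -/
  g : V → V → C
  g_symm : ∀ X Y, g X Y = g Y X
  g_add : ∀ X Y Z, g (X + Y) Z = g X Z + g Y Z
  g_smul : ∀ (f : C) X Y, g (f • X) Y = f * g X Y
  /-- the Levi-Civita connection -/
  nab : V → V → V
  nab_addX : ∀ X Y Z, nab (X + Y) Z = nab X Z + nab Y Z
  nab_smulX : ∀ (f : C) X Y, nab (f • X) Y = f • nab X Y
  nab_add : ∀ X Y Z, nab X (Y + Z) = nab X Y + nab X Z
  nab_leibniz : ∀ X (f : C) Y, nab X (f • Y) = f • nab X Y + (D X f) • Y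
  torsion_free : ∀ X Y, nab X Y - nab Y X = bracket X Y
  nab_metric : ∀ X Y Z, D X (g Y Z) = g (nab X Y) Z + g Y (nab X Z)
  /-- the (local) adapted basis of almost complex structures -/
  I : V → V
  J : V → V
  K : V → V
  I_lin : ∀ (f : C) X Y, I (f • X + Y) = f • I X + I Y
  J_lin : ∀ (f : C) X Y, J (f • X + Y) = f • J X + J Y
  K_lin : ∀ (f : C) X Y, K (f • X + Y) = f • K X + K Y
  I_sq : ∀ X, I (I X) = -X
  J_sq : ∀ X, J (J X) = -X
  K_def : ∀ X, K X = I (J X)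
  anticomm : ∀ X, I (J X) = -J (I X)
  I_metric : ∀ X Y, g (I X) (I Y) = g X Y
  J_metric : ∀ X Y, g (J X) (J Y) = g X Y
  /-- a (local) orthonormal frame -/
  frame : Fin (4 * n) → V
  frame_orthonormal : ∀ i j, g (frame i) (frame j) = if i = j then 1 else 0
  frame_span : ∀ X, X = ∑ i, g X (frame i) • frame i

namespace AQH

section ops

variable {C V : Type*} [CommRing C]

/-- the operator `A_(1)` on covariant 3-tensors -/
def op1 (A : V → V) (ψ : V → V → V → C) : V → V → V → C := fun X Y Z => -ψ (A X) Y Z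

/-- the operator `A_(2)` on covariant 3-tensors -/
def op2 (A : V → V) (ψ : V → V → V → C) : V → V → V → C := fun X Y Z => -ψ X (A Y) Z

/-- the operator `A_(3)` on covariant 3-tensors -/
def op3 (A : V → V) (ψ : V → V → V → C) : V → V → V → C := fun X Y Z => -ψ X Y (A Z)

/-- the operator `A_(12) = A_(1) A_(2)` on covariant 3-tensors -/
def op12 (A : V → V) (ψ : V → V → V → C) : V → V → V → C := fun X Y Z => ψ (A X) (A Y) Z

/-- the operator `A_(13) = A_(1) A_(3)` on covariant 3-tensors -/
def op13 (A : V → V) (ψ : V → V → V → C) : V → V → V → C := fun X Y Z => ψ (A X) Y (A Z)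

/-- the operator `A_(23) = A_(2) A_(3)` on covariant 3-tensors -/
def op23 (A : V → V) (ψ : V → V → V → C) : V → V → V → C := fun X Y Z => ψ X (A Y) (A Z)

/-- the operator `𝓛_A = A_(12) + A_(13) + A_(23)` on three-forms -/
def calL (A : V → V) (ψ : V → V → V → C) : V → V → V → C :=
  fun X Y Z => op12 A ψ X Y Z + op13 A ψ X Y Z + op23 A ψ X Y Z

/-- the action `(A ν)(X) = -ν (A X)` of `A` on a one-form -/
def act1 (A : V → V) (ν : V → C) : V → C := fun X => -ν (A X)

/-- the action `(A ψ)(X,Y,Z) = -ψ(AX,AY,AZ)` of `A` on a three-form -/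
def act3 (A : V → V) (ψ : V → V → V → C) : V → V → V → C :=
  fun X Y Z => -ψ (A X) (A Y) (A Z)

/-- wedge product of two one-forms -/
def wedge11 (α β : V → C) : V → V → C := fun X Y => α X * β Y - α Y * β X

/-- wedge product of a one-form and a two-form -/
def wedge12 (ν : V → C) (ω : V → V → C) : V → V → V → C :=
  fun X Y Z => ν X * ω Y Z - ν Y * ω X Z + ν Z * ω X Y

/-- wedge product of two two-forms -/
def wedge22 (α β : V → V → C) : V → V → V → V → C := fun X Y Z W =>
  α X Y * β Z W - α X Z * β Y W + α X W * β Y Z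
    + α Z W * β X Y - α Y W * β X Z + α Y Z * β X W

/-- a (0,3)-tensor is an alternating three-form -/
def IsAlt3 (T : V → V → V → C) : Prop :=
  (∀ X Y Z, T Y X Z = -T X Y Z) ∧ (∀ X Y Z, T X Z Y = -T X Y Z)

variable [AddCommGroup V] [Module C V]

/-- `C`-linearity (tensoriality) of a three-form in its first argument -/
def Lin3 (T : V → V → V → C) : Prop :=
  ∀ (f : C) X X' Y Z, T (f • X + X') Y Z = f * T X Y Z + T X' Y Z

/-- `C`-linearity (tensoriality) of a one-form -/
def Lin1 (ν : V → C) : Prop := ∀ (f : C) X X', ν (f • X + X') = f * ν X + ν X'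

end ops

section derived

variable {n : ℕ} {C V : Type*} [CommRing C] [Algebra ℝ C] [AddCommGroup V] [Module C V]
  [Module ℝ V] [IsScalarTower ℝ C V]

variable (M : AQH n C V)

/-- the Kähler form `ω_A(X,Y) = g(X, A Y)` -/
def omega (A : V → V) : V → V → C := fun X Y => M.g X (A Y)

/-- `(∇_X A) Y` -/
def nabA (A : V → V) : V → V → V := fun X Y => M.nab X (A Y) - A (M.nab X Y)

/-- covariant derivative of a 2-form: `(∇_X ψ)(Y,Z)` -/
def nab2 (ψ : V → V → C) : V → V → V → C :=
  fun X Y Z => M.D X (ψ Y Z) - ψ (M.nab X Y) Z - ψ Y (M.nab X Z)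

/-- covariant derivative of a 4-form -/
def nab4 (ψ : V → V → V → V → C) : V → V → V → V → V → C :=
  fun X Y Z W U => M.D X (ψ Y Z W U) - ψ (M.nab X Y) Z W U - ψ Y (M.nab X Z) W U
    - ψ Y Z (M.nab X W) U - ψ Y Z W (M.nab X U)

/-- exterior derivative of a one-form -/
def d1 (ν : V → C) : V → V → C :=
  fun X Y => M.D X (ν Y) - M.D Y (ν X) - ν (M.bracket X Y)

/-- exterior derivative of a two-form -/
def d2 (ψ : V → V → C) : V → V → V → C :=
  fun X Y Z => M.D X (ψ Y Z) - M.D Y (ψ X Z) + M.D Z (ψ X Y)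
    - ψ (M.bracket X Y) Z + ψ (M.bracket X Z) Y - ψ (M.bracket Y Z) X

/-- exterior derivative of a four-form -/
def d4 (ψ : V → V → V → V → C) : V → V → V → V → V → C := fun X Y Z W U =>
  M.D X (ψ Y Z W U) - M.D Y (ψ X Z W U) + M.D Z (ψ X Y W U) - M.D W (ψ X Y Z U)
      + M.D U (ψ X Y Z W)
    - ψ (M.bracket X Y) Z W U + ψ (M.bracket X Z) Y W U - ψ (M.bracket X W) Y Z U
      + ψ (M.bracket X U) Y Z W
    - ψ (M.bracket Y Z) X W U + ψ (M.bracket Y W) X Z U - ψ (M.bracket Y U) X Z W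
    - ψ (M.bracket Z W) X Y U + ψ (M.bracket Z U) X Y W
    - ψ (M.bracket W U) X Y Z

/-- the Nijenhuis tensor `N_A(X,Y)` -/
def nijV (A : V → V) : V → V → V := fun X Y =>
  M.bracket X Y + A (M.bracket (A X) Y) + A (M.bracket X (A Y)) - M.bracket (A X) (A Y)

/-- the Nijenhuis `(0,3)`-tensor `N_A(X,Y,Z) = g(X, N_A(Y,Z))` -/
def nij3 (A : V → V) : V → V → V → C := fun X Y Z => M.g X (M.nijV A Y Z)

/-- the induced inner product of two 2-forms,
`⟨ψ,φ⟩ = (1/2!) ψ(e_i,e_j) φ(e_i,e_j)` -/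
def inner2 (ψ φ : V → V → C) : C :=
  (1/2 : ℝ) • ∑ i, ∑ j, ψ (M.frame i) (M.frame j) * φ (M.frame i) (M.frame j)

/-- the contraction `(Λ_A β)(X) = ⟨X ⌟ β, ω_A⟩` of a three-form -/
def Lam (A : V → V) (β : V → V → V → C) : V → C :=
  fun X => (1/2 : ℝ) •
    ∑ i, ∑ j, β X (M.frame i) (M.frame j) * M.omega A (M.frame i) (M.frame j)

/-- `λ_I(X) = (1/2n) ⟨∇_X ω_J, ω_K⟩` -/
def lambdaI : V → C := fun X =>
  (1/(2*(n:ℝ))) • M.inner2 (fun Y Z => M.nab2 (M.omega M.J) X Y Z) (M.omega M.K)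

/-- `λ_J(X) = (1/2n) ⟨∇_X ω_K, ω_I⟩` -/
def lambdaJ : V → C := fun X =>
  (1/(2*(n:ℝ))) • M.inner2 (fun Y Z => M.nab2 (M.omega M.K) X Y Z) (M.omega M.I)

/-- `λ_K(X) = (1/2n) ⟨∇_X ω_I, ω_J⟩` -/
def lambdaK : V → C := fun X =>
  (1/(2*(n:ℝ))) • M.inner2 (fun Y Z => M.nab2 (M.omega M.I) X Y Z) (M.omega M.J)

/-- codifferential of a two-form -/
def codiff2 (ψ : V → V → C) : V → C := fun Z => -∑ i, M.nab2 ψ (M.frame i) (M.frame i) Z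

/-- codifferential of a four-form -/
def codiff4 (ψ : V → V → V → V → C) : V → V → V → C :=
  fun X Y Z => -∑ i, M.nab4 ψ (M.frame i) (M.frame i) X Y Z

/-- `β_I = J dω_J + K dω_K` -/
def betaI : V → V → V → C := fun X Y Z =>
  act3 M.J (M.d2 (M.omega M.J)) X Y Z + act3 M.K (M.d2 (M.omega M.K)) X Y Z

/-- `β_J = K dω_K + I dω_I` -/
def betaJ : V → V → V → C := fun X Y Z =>
  act3 M.K (M.d2 (M.omega M.K)) X Y Z + act3 M.I (M.d2 (M.omega M.I)) X Y Z

/-- `β_K = I dω_I + J dω_J` -/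
def betaK : V → V → V → C := fun X Y Z =>
  act3 M.I (M.d2 (M.omega M.I)) X Y Z + act3 M.J (M.d2 (M.omega M.J)) X Y Z

/-- the intrinsic torsion
`ξ_X Y = -(1/4) Σ_A A (∇_X A) Y + (1/2) Σ_A λ_A(X) A Y` -/
def xi : V → V → V := fun X Y =>
  (-(1/4 : ℝ)) • (M.I (M.nabA M.I X Y) + M.J (M.nabA M.J X Y) + M.K (M.nabA M.K X Y))
    + (1/2 : ℝ) • (M.lambdaI X • M.I Y + M.lambdaJ X • M.J Y + M.lambdaK X • M.K Y)

/-- the one-form `ν^I_4 = I Λ_I β_I` -/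
def nu4I : V → C := act1 M.I (M.Lam M.I M.betaI)

/-- the one-form `ν^J_4 = J Λ_J β_J` -/
def nu4J : V → C := act1 M.J (M.Lam M.J M.betaJ)

/-- the one-form `ν^K_4 = K Λ_K β_K` -/
def nu4K : V → C := act1 M.K (M.Lam M.K M.betaK)

/-- `ν^I_3`, determined by `J Λ_J β_I = (1/(2n-1)) (ν^I_4 + (2n+1)(n-1) ν^I_3)` -/
def nu3I : V → C := fun X =>
  (1/((2*(n:ℝ)+1) * ((n:ℝ)-1))) •
    ((2*(n:ℝ)-1) • act1 M.J (M.Lam M.J M.betaI) X - M.nu4I X)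

/-- `ν^J_3`, determined by `K Λ_K β_J = (1/(2n-1)) (ν^J_4 + (2n+1)(n-1) ν^J_3)` -/
def nu3J : V → C := fun X =>
  (1/((2*(n:ℝ)+1) * ((n:ℝ)-1))) •
    ((2*(n:ℝ)-1) • act1 M.K (M.Lam M.K M.betaJ) X - M.nu4J X)

/-- `ν^K_3`, determined by `I Λ_I β_K = (1/(2n-1)) (ν^K_4 + (2n+1)(n-1) ν^K_3)` -/
def nu3K : V → C := fun X =>
  (1/((2*(n:ℝ)+1) * ((n:ℝ)-1))) •
    ((2*(n:ℝ)-1) • act1 M.I (M.Lam M.I M.betaK) X - M.nu4K X)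

/-- `β^{(E)}_{3I} = -(1/2) Jν^I_3 ∧ ω_J - (1/2) Kν^I_3 ∧ ω_K + (1/(2n-1)) Iν^I_3 ∧ ω_I` -/
def betaE3I : V → V → V → C := fun X Y Z =>
  (-(1/2:ℝ)) • wedge12 (act1 M.J M.nu3I) (M.omega M.J) X Y Z
    + (-(1/2:ℝ)) • wedge12 (act1 M.K M.nu3I) (M.omega M.K) X Y Z
    + (1/(2*(n:ℝ)-1)) • wedge12 (act1 M.I M.nu3I) (M.omega M.I) X Y Z

def betaE3J : V → V → V → C := fun X Y Z =>
  (-(1/2:ℝ)) • wedge12 (act1 M.K M.nu3J) (M.omega M.K) X Y Z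
    + (-(1/2:ℝ)) • wedge12 (act1 M.I M.nu3J) (M.omega M.I) X Y Z
    + (1/(2*(n:ℝ)-1)) • wedge12 (act1 M.J M.nu3J) (M.omega M.J) X Y Z

def betaE3K : V → V → V → C := fun X Y Z =>
  (-(1/2:ℝ)) • wedge12 (act1 M.I M.nu3K) (M.omega M.I) X Y Z
    + (-(1/2:ℝ)) • wedge12 (act1 M.J M.nu3K) (M.omega M.J) X Y Z
    + (1/(2*(n:ℝ)-1)) • wedge12 (act1 M.K M.nu3K) (M.omega M.K) X Y Z

/-- `β_{4I} = -(1/(2n-1)) Iν^I_4 ∧ ω_I` -/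
def beta4I : V → V → V → C := fun X Y Z =>
  (-(1/(2*(n:ℝ)-1))) • wedge12 (act1 M.I M.nu4I) (M.omega M.I) X Y Z

def beta4J : V → V → V → C := fun X Y Z =>
  (-(1/(2*(n:ℝ)-1))) • wedge12 (act1 M.J M.nu4J) (M.omega M.J) X Y Z

def beta4K : V → V → V → C := fun X Y Z =>
  (-(1/(2*(n:ℝ)-1))) • wedge12 (act1 M.K M.nu4K) (M.omega M.K) X Y Z

/-- `β_I^{(3+K)} = β_I - β^{(E)}_{3I} - β_{4I}` -/
def beta3KI : V → V → V → C := fun X Y Z => M.betaI X Y Z - M.betaE3I X Y Z - M.beta4I X Y Z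

def beta3KJ : V → V → V → C := fun X Y Z => M.betaJ X Y Z - M.betaE3J X Y Z - M.beta4J X Y Z

def beta3KK : V → V → V → C := fun X Y Z => M.betaK X Y Z - M.betaE3K X Y Z - M.beta4K X Y Z

/-- `β_I^{(3)} = (1/6) (2 - 𝓛_J - 𝓛_K) β_I^{(3+K)}` -/
def beta3I : V → V → V → C := fun X Y Z =>
  (1/6:ℝ) • ((2:ℝ) • M.beta3KI X Y Z - calL M.J M.beta3KI X Y Z - calL M.K M.beta3KI X Y Z)

def beta3J : V → V → V → C := fun X Y Z =>
  (1/6:ℝ) • ((2:ℝ) • M.beta3KJ X Y Z - calL M.K M.beta3KJ X Y Z - calL M.I M.beta3KJ X Y Z)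

def beta3K : V → V → V → C := fun X Y Z =>
  (1/6:ℝ) • ((2:ℝ) • M.beta3KK X Y Z - calL M.I M.beta3KK X Y Z - calL M.J M.beta3KK X Y Z)

/-- `β_I^{(K)} = (1/6) (4 + 𝓛_J + 𝓛_K) β_I^{(3+K)}` -/
def betaKI : V → V → V → C := fun X Y Z =>
  (1/6:ℝ) • ((4:ℝ) • M.beta3KI X Y Z + calL M.J M.beta3KI X Y Z + calL M.K M.beta3KI X Y Z)

def betaKJ : V → V → V → C := fun X Y Z =>
  (1/6:ℝ) • ((4:ℝ) • M.beta3KJ X Y Z + calL M.K M.beta3KJ X Y Z + calL M.I M.beta3KJ X Y Z)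

def betaKK : V → V → V → C := fun X Y Z =>
  (1/6:ℝ) • ((4:ℝ) • M.beta3KK X Y Z + calL M.I M.beta3KK X Y Z + calL M.J M.beta3KK X Y Z)

/-- the three-form `ψ^{(3)} = (1/12)(β_I^{(3)} + β_J^{(3)} + β_K^{(3)})` determining `ξ_{33}` -/
def psi3 : V → V → V → C := fun X Y Z =>
  (1/12:ℝ) • (M.beta3I X Y Z + M.beta3J X Y Z + M.beta3K X Y Z)

/-- the three-form `ψ^{(K)} = -(1/48)(β_I^{(K)} + β_J^{(K)} + β_K^{(K)})` determining `ξ_{KH}` -/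
def psiK : V → V → V → C := fun X Y Z =>
  (-(1/48:ℝ)) • (M.betaKI X Y Z + M.betaKJ X Y Z + M.betaKK X Y Z)

/-- the three-form `ψ^{(3)}_I` determining `ξ_{3H}` -/
def psi3I : V → V → V → C := fun X Y Z =>
  (-(1/8:ℝ)) • M.beta3I X Y Z
    + (1/48:ℝ) • ((3:ℝ) • (M.beta3I X Y Z + M.beta3J X Y Z + M.beta3K X Y Z)
        + calL M.I (fun a b c => M.beta3I a b c + M.beta3J a b c + M.beta3K a b c) X Y Z)

def psi3J : V → V → V → C := fun X Y Z =>
  (-(1/8:ℝ)) • M.beta3J X Y Z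
    + (1/48:ℝ) • ((3:ℝ) • (M.beta3I X Y Z + M.beta3J X Y Z + M.beta3K X Y Z)
        + calL M.J (fun a b c => M.beta3I a b c + M.beta3J a b c + M.beta3K a b c) X Y Z)

def psi3K : V → V → V → C := fun X Y Z =>
  (-(1/8:ℝ)) • M.beta3K X Y Z
    + (1/48:ℝ) • ((3:ℝ) • (M.beta3I X Y Z + M.beta3J X Y Z + M.beta3K X Y Z)
        + calL M.K (fun a b c => M.beta3I a b c + M.beta3J a b c + M.beta3K a b c) X Y Z)

/-- the three-form `ψ^{(K)}_I` determining `ξ_{K3}` -/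
def psiKI : V → V → V → C := fun X Y Z =>
  (-(1/2:ℝ)) • M.betaKI X Y Z
    + (1/6:ℝ) • (M.betaKI X Y Z + M.betaKJ X Y Z + M.betaKK X Y Z)

def psiKJ : V → V → V → C := fun X Y Z =>
  (-(1/2:ℝ)) • M.betaKJ X Y Z
    + (1/6:ℝ) • (M.betaKI X Y Z + M.betaKJ X Y Z + M.betaKK X Y Z)

def psiKK : V → V → V → C := fun X Y Z =>
  (-(1/2:ℝ)) • M.betaKK X Y Z
    + (1/6:ℝ) • (M.betaKI X Y Z + M.betaKJ X Y Z + M.betaKK X Y Z)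

/-- the one-form `θ^ξ` determining `ξ_{EH}`,
defined by `(6/n)(2n+1)(n-1) θ^ξ(X) = -⟨ξ_{e_i} e_i, X⟩` -/
def thetaXi : V → C := fun X =>
  (-((n:ℝ)/(6*(2*(n:ℝ)+1)*((n:ℝ)-1)))) • ∑ i, M.g (M.xi (M.frame i) (M.frame i)) X

/-- the local one-form `θ^ξ_I`, defined by `(2/n)(2n+1)(n-1) θ^ξ_I(X) = -⟨I ξ_{e_i} I e_i, X⟩` -/
def thetaXiI : V → C := fun X =>
  (-((n:ℝ)/(2*(2*(n:ℝ)+1)*((n:ℝ)-1)))) •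
    ∑ i, M.g (M.I (M.xi (M.frame i) (M.I (M.frame i)))) X

def thetaXiJ : V → C := fun X =>
  (-((n:ℝ)/(2*(2*(n:ℝ)+1)*((n:ℝ)-1)))) •
    ∑ i, M.g (M.J (M.xi (M.frame i) (M.J (M.frame i)))) X

def thetaXiK : V → C := fun X =>
  (-((n:ℝ)/(2*(2*(n:ℝ)+1)*((n:ℝ)-1)))) •
    ∑ i, M.g (M.K (M.xi (M.frame i) (M.K (M.frame i)))) X

/-- `α_I = -λ_I ⊗ g + (1/2)(J_(2) - J_(3)) ∇ω_K` -/
def alphaI : V → V → V → C := fun X Y Z =>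
  -(M.lambdaI X * M.g Y Z)
    + (1/2:ℝ) • (-(M.nab2 (M.omega M.K) X (M.J Y) Z) + M.nab2 (M.omega M.K) X Y (M.J Z))

def alphaJ : V → V → V → C := fun X Y Z =>
  -(M.lambdaJ X * M.g Y Z)
    + (1/2:ℝ) • (-(M.nab2 (M.omega M.I) X (M.K Y) Z) + M.nab2 (M.omega M.I) X Y (M.K Z))

def alphaK : V → V → V → C := fun X Y Z =>
  -(M.lambdaK X * M.g Y Z)
    + (1/2:ℝ) • (-(M.nab2 (M.omega M.J) X (M.I Y) Z) + M.nab2 (M.omega M.J) X Y (M.I Z))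

/-- the one-form `η_I(X) = α_I(e_i; e_i, X)` -/
def etaI : V → C := fun X => ∑ i, M.alphaI (M.frame i) (M.frame i) X

def etaJ : V → C := fun X => ∑ i, M.alphaJ (M.frame i) (M.frame i) X

def etaK : V → C := fun X => ∑ i, M.alphaK (M.frame i) (M.frame i) X

/-- the fundamental four-form `Ω = Σ_A ω_A ∧ ω_A` -/
def Omega4 : V → V → V → V → C := fun X Y Z W =>
  wedge22 (M.omega M.I) (M.omega M.I) X Y Z W
    + wedge22 (M.omega M.J) (M.omega M.J) X Y Z W
    + wedge22 (M.omega M.K) (M.omega M.K) X Y Z W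

/-- the one-form `θ^{d*Ω} = (1/3) Σ_A A Λ_A d*Ω` -/
def thetaDOmega : V → C := fun X =>
  (1/3:ℝ) • (act1 M.I (M.Lam M.I (M.codiff4 M.Omega4)) X
    + act1 M.J (M.Lam M.J (M.codiff4 M.Omega4)) X
    + act1 M.K (M.Lam M.K (M.codiff4 M.Omega4)) X)

/-- the vector-valued torsion: `g(W, T(X,Y)) = T(W,X,Y)` -/
def Tvec (T : V → V → V → C) : V → V → V := fun X Y => ∑ i, T (M.frame i) X Y • M.frame i

/-- the connection `∇ + (1/2) T` associated to a torsion (0,3)-tensor `T` -/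
def nabT (T : V → V → V → C) : V → V → V := fun X Y => M.nab X Y + (1/2:ℝ) • M.Tvec T X Y

/-- a connection is metric -/
def MetricConn (nab' : V → V → V) : Prop :=
  ∀ X Y Z, M.D X (M.g Y Z) = M.g (nab' X Y) Z + M.g Y (nab' X Z)

/-- a connection is quaternionic, with associated local one-forms `γ_I, γ_J, γ_K`:
`∇'_X I = γ_K(X) J - γ_J(X) K`, and cyclically -/
def QuatConn (nab' : V → V → V) (γI γJ γK : V → C) : Prop :=
  (∀ X Y, nab' X (M.I Y) - M.I (nab' X Y) = γK X • M.J Y - γJ X • M.K Y) ∧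
  (∀ X Y, nab' X (M.J Y) - M.J (nab' X Y) = γI X • M.K Y - γK X • M.I Y) ∧
  (∀ X Y, nab' X (M.K Y) - M.K (nab' X Y) = γJ X • M.I Y - γI X • M.J Y)

/-- the HKT condition: `I, J, K` integrable and there is a metric connection
`∇ + (1/2)T` with totally skew torsion making `I, J, K` parallel -/
def IsHKT : Prop :=
  (∀ X Y, M.nijV M.I X Y = 0) ∧ (∀ X Y, M.nijV M.J X Y = 0) ∧
  (∀ X Y, M.nijV M.K X Y = 0) ∧
  ∃ T : V → V → V → C, IsAlt3 T ∧ Lin3 T ∧ M.MetricConn (M.nabT T) ∧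
    (∀ X Y, M.nabT T X (M.I Y) = M.I (M.nabT T X Y)) ∧
    (∀ X Y, M.nabT T X (M.J Y) = M.J (M.nabT T X Y)) ∧
    (∀ X Y, M.nabT T X (M.K Y) = M.K (M.nabT T X Y))

/-- membership of a three-form in `KH`: type `{2,1}` for each `A` and `Λ_A ψ = 0` -/
def InKH3 (ψ : V → V → V → C) : Prop :=
  IsAlt3 ψ ∧ Lin3 ψ ∧
  calL M.I ψ = ψ ∧ calL M.J ψ = ψ ∧ calL M.K ψ = ψ ∧
  M.Lam M.I ψ = 0 ∧ M.Lam M.J ψ = 0 ∧ M.Lam M.K ψ = 0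

/-- the `(0,3)`-tensor of the `KH`-component of the torsion determined by `ψ^{(K)}`:
`3ψ - Σ_A A_(23) ψ` -/
def xiKH3 (ψ : V → V → V → C) : V → V → V → C := fun X Y Z =>
  (3:ℝ) • ψ X Y Z - (op23 M.I ψ X Y Z + op23 M.J ψ X Y Z + op23 M.K ψ X Y Z)

/-- the `(0,3)`-tensor of the `EH`-component of the torsion determined by the
one-form `θ`: `3 e_i ⊗ e_i ∧ θ - Σ_A (e_i ⊗ A e_i ∧ A θ + (2/n) A θ ⊗ ω_A)` -/
def xiEH3 (θ : V → C) : V → V → V → C := fun X Y Z =>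
  (3:ℝ) • ∑ i, M.g (M.frame i) X *
      (M.g (M.frame i) Y * θ Z - M.g (M.frame i) Z * θ Y)
  - ((∑ i, M.g (M.frame i) X *
        (M.g (M.I (M.frame i)) Y * act1 M.I θ Z - M.g (M.I (M.frame i)) Z * act1 M.I θ Y))
    + (∑ i, M.g (M.frame i) X *
        (M.g (M.J (M.frame i)) Y * act1 M.J θ Z - M.g (M.J (M.frame i)) Z * act1 M.J θ Y))
    + (∑ i, M.g (M.frame i) X *
        (M.g (M.K (M.frame i)) Y * act1 M.K θ Z - M.g (M.K (M.frame i)) Z * act1 M.K θ Y)))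
  - (2/(n:ℝ)) • (act1 M.I θ X * M.omega M.I Y Z + act1 M.J θ X * M.omega M.J Y Z
      + act1 M.K θ X * M.omega M.K Y Z)

/-- the intrinsic torsion lies in `(K+E)H`: it is the sum of a `KH`-tensor and an
`EH`-tensor as described in §3 of the paper -/
def inKEH : Prop :=
  ∃ (ψ : V → V → V → C) (θ : V → C), M.InKH3 ψ ∧ Lin1 θ ∧
    ∀ X Y Z, M.g Y (M.xi X Z) = M.xiKH3 ψ X Y Z + M.xiEH3 θ X Y Z

end derived

end AQH

/-!
Since `∇` is torsion-free, `dω_A` is the cyclic sum of `∇ω_A`, and cyclic sums commute with both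
`A` and `𝓛_A`. So `β_I` is the cyclic sum of `b = J ∇ω_J + K ∇ω_K`, and it suffices that
`𝓛_I b = b`, which already holds before the cyclic sum is taken. Because `∇_X ω_A` is of type
`{2,0}` for `A`, one has `b(X, Y, Z) = (∇_{JX} ω_J)(Y, Z) + (∇_{KX} ω_K)(Y, Z)`. The claim is then
an identity in the last two slots only, obtained by differentiating `KI = J` and `JI = -K`.
-/

namespace AQH

theorem isLinearMap_of_map_smul_add {R V W : Type*} [Ring R] [AddCommGroup V] [AddCommGroup W]
    [Module R V] [Module R W] {A : V → W}
    (h : ∀ (f : R) X Y, A (f • X + Y) = f • A X + A Y) : IsLinearMap R A :=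
  have map_add (X Y : V) : A (X + Y) = A X + A Y := by simpa only [one_smul] using h 1 X Y
  have map_zero : A 0 = 0 := (AddMonoidHom.mk' A map_add).map_zero
  ⟨map_add, fun f X => by simpa only [map_zero, add_zero] using h f X 0⟩

section cyclic

variable {C V : Type*} [CommRing C]

/-- The sum of a covariant 3-tensor over the cyclic permutations of its arguments, used to express
the exterior derivative of a two-form through its covariant derivative. -/
def cyclicSum (ψ : V → V → V → C) : V → V → V → C := fun X Y Z => ψ X Y Z + ψ Y Z X + ψ Z X Y

theorem cyclicSum_add (ψ φ : V → V → V → C) :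
    cyclicSum (ψ + φ) = cyclicSum ψ + cyclicSum φ := by
  funext X Y Z
  simp only [cyclicSum, Pi.add_apply]
  ring

theorem act3_cyclicSum (A : V → V) (ψ : V → V → V → C) :
    act3 A (cyclicSum ψ) = cyclicSum (act3 A ψ) := by
  funext X Y Z
  simp only [cyclicSum, act3]
  ring

theorem calL_cyclicSum (A : V → V) (ψ : V → V → V → C) :
    calL A (cyclicSum ψ) = cyclicSum (calL A ψ) := by
  funext X Y Z
  simp only [cyclicSum, calL, op12, op13, op23]
  ring

end cyclic

section covariantDerivative

variable {n : ℕ} {C V : Type*} [CommRing C] [Algebra ℝ C] [AddCommGroup V] [Module C V]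
  (M : AQH n C V)

theorem D_neg (X : V) (f : C) : M.D X (-f) = -M.D X f :=
  (AddMonoidHom.mk' (M.D X) (M.D_add X)).map_neg f

theorem nab_neg_left (X Y : V) : M.nab (-X) Y = -M.nab X Y :=
  (AddMonoidHom.mk' (M.nab · Y) (M.nab_addX · · Y)).map_neg X

theorem nab_neg_right (X Y : V) : M.nab X (-Y) = -M.nab X Y :=
  (AddMonoidHom.mk' (M.nab X) (M.nab_add X)).map_neg Y

theorem g_add_right (X Y Z : V) : M.g X (Y + Z) = M.g X Y + M.g X Z := by
  rw [M.g_symm, M.g_add, M.g_symm Y, M.g_symm Z]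

theorem g_neg_right (X Y : V) : M.g X (-Y) = -M.g X Y :=
  (AddMonoidHom.mk' (M.g X) (M.g_add_right X)).map_neg Y

theorem g_sub_right (X Y Z : V) : M.g X (Y - Z) = M.g X Y - M.g X Z :=
  (AddMonoidHom.mk' (M.g X) (M.g_add_right X)).map_sub Y Z

theorem d2_eq_cyclicSum_nab2 {ψ : V → V → C}
    (add_left : ∀ X Y Z, ψ (X + Y) Z = ψ X Z + ψ Y Z) (skew : ∀ X Y, ψ X Y = -ψ Y X) :
    M.d2 ψ = cyclicSum (M.nab2 ψ) := by
  have sub_left (X Y Z : V) : ψ (X - Y) Z = ψ X Z - ψ Y Z :=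
    (AddMonoidHom.mk' (ψ · Z) (add_left · · Z)).map_sub X Y
  funext X Y Z
  have D_skew : M.D Y (ψ Z X) = -M.D Y (ψ X Z) := by rw [skew Z X, D_neg]
  simp only [d2, cyclicSum, nab2, ← M.torsion_free, sub_left]
  linear_combination -D_skew + skew Y (M.nab X Z) + skew Z (M.nab Y X) + skew X (M.nab Z Y)

theorem nab2_omega (A : V → V) (X Y Z : V) :
    M.nab2 (M.omega A) X Y Z = M.g Y (M.nabA A X Z) := by
  simp only [nab2, omega, nabA, M.nab_metric, g_sub_right]
  ring

theorem nabA_neg (A : V → V) (X Y : V) : M.nabA (-A) X Y = -M.nabA A X Y := by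
  simp only [nabA, Pi.neg_apply, nab_neg_right]
  abel

variable {A : V → V}

theorem nabA_neg_left (hA : IsLinearMap C A) (X Y : V) :
    M.nabA A (-X) Y = -M.nabA A X Y := by
  simp only [nabA, nab_neg_left, hA.map_neg]
  abel

theorem nabA_neg_right (hA : IsLinearMap C A) (X Y : V) :
    M.nabA A X (-Y) = -M.nabA A X Y := by
  simp only [nabA, nab_neg_right, hA.map_neg]
  abel

theorem nabA_comp (hA : IsLinearMap C A) (B : V → V) (X Y : V) :
    M.nabA (A ∘ B) X Y = M.nabA A X (B Y) + A (M.nabA B X Y) := by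
  simp only [nabA, Function.comp_apply, hA.map_sub]
  abel

end covariantDerivative

section almostHermitian

variable {n : ℕ} {C V : Type*} [CommRing C] [Algebra ℝ C] [AddCommGroup V] [Module C V]

/-- `A` is an almost complex structure compatible with the metric of `M`. -/
structure IsAlmostHermitian (M : AQH n C V) (A : V → V) : Prop extends IsLinearMap C A where
  sq : ∀ X, A (A X) = -X
  isometry : ∀ X Y, M.g (A X) (A Y) = M.g X Y

namespace IsAlmostHermitian

variable {M : AQH n C V} {A : V → V}

theorem g_map_left (hA : M.IsAlmostHermitian A) (X Y : V) : M.g (A X) Y = -M.g X (A Y) := by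
  rw [← hA.isometry X (A Y), hA.sq, g_neg_right, neg_neg]

theorem omega_skew (hA : M.IsAlmostHermitian A) (X Y : V) :
    M.omega A X Y = -M.omega A Y X := by
  rw [omega, omega, M.g_symm, hA.g_map_left]

theorem d2_omega (hA : M.IsAlmostHermitian A) :
    M.d2 (M.omega A) = cyclicSum (M.nab2 (M.omega A)) :=
  M.d2_eq_cyclicSum_nab2 (fun X Y Z => M.g_add X Y (A Z)) hA.omega_skew

theorem nabA_map (hA : M.IsAlmostHermitian A) (X Y : V) :
    M.nabA A X (A Y) = -A (M.nabA A X Y) := by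
  have nabA_sq : M.nabA (A ∘ A) X Y = 0 := by
    simp only [nabA, Function.comp_apply, hA.sq, nab_neg_right, sub_self]
  rwa [M.nabA_comp hA.toIsLinearMap, add_eq_zero_iff_eq_neg] at nabA_sq

theorem nab2_omega_map_map (hA : M.IsAlmostHermitian A) (X Y Z : V) :
    M.nab2 (M.omega A) X (A Y) (A Z) = -M.nab2 (M.omega A) X Y Z := by
  simp only [nab2_omega, hA.nabA_map, g_neg_right, hA.isometry]

theorem act3_nab2_omega (hA : M.IsAlmostHermitian A) (X Y Z : V) :
    act3 A (M.nab2 (M.omega A)) X Y Z = M.nab2 (M.omega A) (A X) Y Z := by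
  rw [act3, hA.nab2_omega_map_map, neg_neg]

theorem nab2_omega_neg_left (hA : M.IsAlmostHermitian A) (X Y Z : V) :
    M.nab2 (M.omega A) (-X) Y Z = -M.nab2 (M.omega A) X Y Z := by
  rw [nab2_omega, M.nabA_neg_left hA.toIsLinearMap, g_neg_right, nab2_omega]

theorem nab2_omega_neg_right (hA : M.IsAlmostHermitian A) (X Y Z : V) :
    M.nab2 (M.omega A) X Y (-Z) = -M.nab2 (M.omega A) X Y Z := by
  rw [nab2_omega, M.nabA_neg_right hA.toIsLinearMap, g_neg_right, nab2_omega]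

end IsAlmostHermitian

end almostHermitian

section adaptedBasis

variable {n : ℕ} {C V : Type*} [CommRing C] [Algebra ℝ C] [AddCommGroup V] [Module C V]

/-- `A, B, E` is an adapted basis: `A` and `B` are anticommuting almost Hermitian structures and
`E = AB`. The symmetry between the three structures is recovered in `IsAdaptedBasis.rotate`. -/
structure IsAdaptedBasis (M : AQH n C V) (A B E : V → V) : Prop where
  first : M.IsAlmostHermitian A
  second : M.IsAlmostHermitian B
  first_second : ∀ X, A (B X) = E X
  second_first : ∀ X, B (A X) = -E X

theorem isAdaptedBasis (M : AQH n C V) : M.IsAdaptedBasis M.I M.J M.K where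
  first :=
    { toIsLinearMap := isLinearMap_of_map_smul_add M.I_lin
      sq := M.I_sq
      isometry := M.I_metric }
  second :=
    { toIsLinearMap := isLinearMap_of_map_smul_add M.J_lin
      sq := M.J_sq
      isometry := M.J_metric }
  first_second X := (M.K_def X).symm
  second_first X := by rw [M.K_def, M.anticomm, neg_neg]

namespace IsAdaptedBasis

variable {M : AQH n C V} {A B E : V → V}

theorem third_first (h : M.IsAdaptedBasis A B E) (X : V) : E (A X) = B X := by
  rw [← h.first_second, h.second_first, h.first.map_neg, ← h.first_second, h.first.sq, neg_neg]

theorem third_second (h : M.IsAdaptedBasis A B E) (X : V) : E (B X) = -A X := by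
  rw [← h.first_second, h.second.sq, h.first.map_neg]

theorem second_third (h : M.IsAdaptedBasis A B E) (X : V) : B (E X) = A X := by
  rw [← neg_neg (E X), ← h.second_first, h.second.map_neg, h.second.sq, neg_neg]

theorem third (h : M.IsAdaptedBasis A B E) : M.IsAlmostHermitian E where
  map_add X Y := by simp only [← h.first_second, h.second.map_add, h.first.map_add]
  map_smul f X := by simp only [← h.first_second, h.second.map_smul, h.first.map_smul]
  sq X := by rw [← h.first_second X, h.third_first, h.second.sq]
  isometry X Y := by rw [← h.first_second, ← h.first_second, h.first.isometry, h.second.isometry]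

theorem rotate (h : M.IsAdaptedBasis A B E) : M.IsAdaptedBasis B E A where
  first := h.second
  second := h.third
  first_second := h.second_third
  second_first := h.third_second

theorem nab2_omega_third_add (h : M.IsAdaptedBasis A B E) (X Y Z : V) :
    M.nab2 (M.omega E) X (A Y) Z + M.nab2 (M.omega E) X Y (A Z) =
      M.nab2 (M.omega B) X Y Z - M.nab2 (M.omega B) X (A Y) (A Z) := by
  have nabA_second : M.nabA B X Z = M.nabA E X (A Z) + E (M.nabA A X Z) := by
    rw [← M.nabA_comp h.third.toIsLinearMap, show E ∘ A = B from funext h.third_first]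
  have nabA_third : -M.nabA E X Z = M.nabA B X (A Z) + B (M.nabA A X Z) := by
    rw [← M.nabA_comp h.second.toIsLinearMap, show B ∘ A = -E from funext h.second_first,
      nabA_neg]
  have g_second := congrArg (M.g Y) nabA_second
  have g_third := congrArg (M.g (A Y)) nabA_third
  have g_cross : M.g (A Y) (B (M.nabA A X Z)) = -M.g Y (E (M.nabA A X Z)) := by
    rw [h.first.g_map_left, h.first_second]
  simp only [g_add_right, g_neg_right] at g_second g_third
  simp only [nab2_omega]
  linear_combination -g_second - g_third - g_cross

theorem nab2_omega_second_add (h : M.IsAdaptedBasis A B E) (X Y Z : V) :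
    M.nab2 (M.omega B) X (A Y) Z + M.nab2 (M.omega B) X Y (A Z) =
      M.nab2 (M.omega E) X (A Y) (A Z) - M.nab2 (M.omega E) X Y Z := by
  have twisted := h.nab2_omega_third_add X Y (A Z)
  rw [h.first.sq, h.third.nab2_omega_neg_right, h.second.nab2_omega_neg_right] at twisted
  linear_combination -twisted

theorem calL_act3_nab2_omega_add (h : M.IsAdaptedBasis A B E) :
    calL A (act3 B (M.nab2 (M.omega B)) + act3 E (M.nab2 (M.omega E))) =
      act3 B (M.nab2 (M.omega B)) + act3 E (M.nab2 (M.omega E)) := by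
  funext X Y Z
  simp only [calL, op12, op13, op23, Pi.add_apply, h.second.act3_nab2_omega,
    h.third.act3_nab2_omega, h.second_first, h.third_first, h.second.nab2_omega_neg_left]
  linear_combination h.nab2_omega_third_add (B X) Y Z - h.nab2_omega_second_add (E X) Y Z

theorem calL_act3_d2_omega_add (h : M.IsAdaptedBasis A B E) :
    calL A (act3 B (M.d2 (M.omega B)) + act3 E (M.d2 (M.omega E))) =
      act3 B (M.d2 (M.omega B)) + act3 E (M.d2 (M.omega E)) := by
  rw [h.second.d2_omega, h.third.d2_omega, act3_cyclicSum, act3_cyclicSum, ← cyclicSum_add,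
    calL_cyclicSum, h.calL_act3_nab2_omega_add]

end IsAdaptedBasis

end adaptedBasis

end AQH

open AQH in
/-- On an almost quaternion-Hermitian manifold, for any local
adapted basis, the three-form `β_I = J dω_J + K dω_K` is of type `{2,1}` with
respect to `I`, i.e. `(I_(12) + I_(13) + I_(23)) β_I = β_I`, and likewise for
`β_J` with respect to `J` and `β_K` with respect to `K`. -/
theorem statement5 {n : ℕ} {C V : Type*} [CommRing C] [Algebra ℝ C] [AddCommGroup V]
    [Module C V] [Module ℝ V] [IsScalarTower ℝ C V] (M : AQH n C V) :
    (op12 M.I M.betaI + op13 M.I M.betaI + op23 M.I M.betaI = M.betaI) ∧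
    (op12 M.J M.betaJ + op13 M.J M.betaJ + op23 M.J M.betaJ = M.betaJ) ∧
    (op12 M.K M.betaK + op13 M.K M.betaK + op23 M.K M.betaK = M.betaK) := by
  have hIJK := M.isAdaptedBasis
  exact ⟨hIJK.calL_act3_d2_omega_add, hIJK.rotate.calL_act3_d2_omega_add,
    hIJK.rotate.rotate.calL_act3_d2_omega_add⟩
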